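/- arXiv:1907.09152 — 2 statements merged into one kernel-verified Lean document; each statement's English description precedes it below -/
import Mathlib

section
/- For any positive integers k, l and n, the Toeplitz graph G_n(0^k 1^l), in which distinct vertices i < j of {1,…,n} are adjacent if and only if the residue of j−i modulo k+l, taken in {1,…,k+l}, is at least k+1, is word-representable. -/
/-!
A finite graph with a semi-transitive orientation is word-representable. Concatenate words in which
every oriented edge `u → v` reads `uvuv⋯uv`; then it suffices to break the alternation of each
non-adjacent pair `x`, `y` with one such word. If there is no path `x ⇝ y`, swap `x` and `y` by
moving the ancestors of `y` to the front. If there is one, let `X` be the ancestors of `x` and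
`Y` the descendants of `y`: an edge from `X` to `Y` would be a shortcut of the path through `x`
and `y`, so repeating `X` before the first `Y` breaks no edge.

For `G_n(0^k 1^l)`, orient the edges from the smaller to the larger residue modulo `k + l`, and
within a residue class from the larger to the smaller quotient. Along a path the residue never
decreases, and either the quotient drops or the residue grows by more than `k`; since residues are
less than `k + l`, this leaves no room for a shortcut.
-/


/-- Two letters `x` and `y` alternate in the word `w` if, after deleting all
letters other than `x` and `y`, consecutive letters always differ
(i.e. the restriction has the form `xyxy⋯` or `yxyx⋯`). -/
def Alternates {V : Type*} [DecidableEq V] (w : List V) (x y : V) : Prop :=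
  (w.filter (fun z => z = x || z = y)).Chain' (· ≠ ·)

/-- A word `w` represents the graph `G`: every vertex occurs in `w`, and two
distinct letters alternate in `w` iff they are adjacent in `G`. -/
def Represents {V : Type*} [DecidableEq V] (w : List V) (G : SimpleGraph V) : Prop :=
  (∀ v, v ∈ w) ∧ ∀ x y : V, x ≠ y → (Alternates w x y ↔ G.Adj x y)

/-- A graph is word-representable if some word represents it. -/
def WordRepresentable {V : Type*} [DecidableEq V] (G : SimpleGraph V) : Prop :=
  ∃ w : List V, Represents w G

/-- The representative of `d` modulo `m` taken in `{1, …, m}`. -/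
def repMod (d m : ℕ) : ℕ := if d % m = 0 then m else d % m

/-- The Toeplitz graph `G_n(a₁ ⋯ a_m)` on vertex set `{1,…,n}` (encoded as `Fin n`,
with `v : Fin n` standing for the label `v+1`): vertices `i < j` are adjacent iff
`a r = true` where `r ∈ {1,…,m}` is congruent to `j - i` modulo `m`. -/
def toeplitzGraph (n m : ℕ) (a : ℕ → Bool) : SimpleGraph (Fin n) :=
  SimpleGraph.fromRel (fun i j => (i : ℕ) < (j : ℕ) ∧ a (repMod ((j : ℕ) - (i : ℕ)) m) = true)

section Words

theorem isChain_ne_cons_flatten_replicate {V : Type*} {x y : V} (hxy : x ≠ y) (N : ℕ) :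
    (y :: (List.replicate N [x, y]).flatten).IsChain (· ≠ ·) := by
  induction N with
  | zero => exact .singleton y
  | succ N ih => exact .cons_cons hxy.symm (.cons_cons hxy ih)

variable {V : Type*} [DecidableEq V] {T w w₁ w₂ : List V} {x y : V}

/-- The restriction of the word `w` to the letters `x` and `y`, as in `Alternates`. -/
def pairSubword (w : List V) (x y : V) : List V :=
  w.filter fun z => z = x || z = y

theorem pairSubword_append (w₁ w₂ : List V) (x y : V) :
    pairSubword (w₁ ++ w₂) x y = pairSubword w₁ x y ++ pairSubword w₂ x y :=
  List.filter_append ..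

theorem pairSubword_filter (w : List V) (p : V → Bool) (x y : V) :
    pairSubword (w.filter p) x y = (pairSubword w x y).filter p :=
  List.filter_comm ..

theorem alternates_comm : Alternates w x y ↔ Alternates w y x := by
  simp only [Alternates, Bool.or_comm]

theorem Alternates.of_isInfix (h : Alternates w₂ x y) (hw : w₁ <:+: w₂) : Alternates w₁ x y :=
  List.IsChain.infix h (hw.filter _)

/-- The letters `x` and `y` occur in the word `w` in the pattern `xyxy⋯xy`, starting with `x` and
ending with `y`. Unlike `Alternates`, this is preserved by concatenation. -/
def AlternatesFrom (w : List V) (x y : V) : Prop :=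
  ∃ N, pairSubword w x y = (List.replicate N [x, y]).flatten

theorem AlternatesFrom.append (h₁ : AlternatesFrom w₁ x y) (h₂ : AlternatesFrom w₂ x y) :
    AlternatesFrom (w₁ ++ w₂) x y := by
  obtain ⟨M, hM⟩ := h₁
  obtain ⟨N, hN⟩ := h₂
  exact ⟨M + N, by
    rw [pairSubword_append, hM, hN, ← List.flatten_append, List.replicate_append_replicate]⟩

theorem AlternatesFrom.flatten {L : List (List V)} (h : ∀ w ∈ L, AlternatesFrom w x y) :
    AlternatesFrom L.flatten x y := by
  induction L with
  | nil => exact ⟨0, rfl⟩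
  | cons w L ih =>
    rw [List.forall_mem_cons] at h
    exact h.1.append (ih h.2)

theorem AlternatesFrom.alternates (h : AlternatesFrom w x y) (hxy : x ≠ y) :
    Alternates w x y := by
  obtain ⟨N, hN⟩ := h
  change (pairSubword w x y).IsChain (· ≠ ·)
  rw [hN]
  exact (isChain_ne_cons_flatten_replicate hxy N).tail

theorem alternatesFrom_of_pairSubword_eq (hT : pairSubword T x y = [x, y]) :
    AlternatesFrom T x y :=
  ⟨1, hT⟩

theorem exists_list_pairSubword_eq [Finite V] (s : V → V → Prop) [IsLinearOrder V s] :
    ∃ T : List V, (∀ v, v ∈ T) ∧ ∀ x y, x ≠ y → s x y → pairSubword T x y = [x, y] := by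
  classical
  cases nonempty_fintype V
  let T : List V := Finset.univ.sort s
  have hmem : ∀ v, v ∈ T := fun v => (Finset.mem_sort s).2 (Finset.mem_univ v)
  have hnodup : T.Nodup := Finset.sort_nodup _ s
  refine ⟨T, hmem, fun x y hxy hs => ?_⟩
  have hperm : (pairSubword T x y).Perm [x, y] := by
    rw [pairSubword, List.perm_ext_iff_of_nodup (hnodup.filter _) (by simp [hxy])]
    simp [hmem]
  refine (List.perm_pair.1 hperm).resolve_right fun hyx => hxy ?_
  have hsorted : (pairSubword T x y).Pairwise s := (Finset.pairwise_sort _ s).filter _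
  rw [hyx, List.pairwise_pair] at hsorted
  exact antisymm hs hsorted

end Words

section Separation

variable {V : Type*} [DecidableEq V] {T : List V} {X Y : Set V} {u v x y : V}

open scoped Classical in
/-- The word `TXZ`, where `Z` is the complement of `X` and each block is listed in the order of
`T`. -/
noncomputable def swapWord (T : List V) (X : Set V) : List V :=
  T ++ T.filter (· ∈ X) ++ T.filter (· ∉ X)

open scoped Classical in
/-- The word `XZXYZY`, where `Z` is the complement of `X ∪ Y` and each block is listed in the
order of `T`. -/
noncomputable def stretchWord (T : List V) (X Y : Set V) : List V :=
  T.filter (· ∈ X) ++ T.filter (· ∉ X ∪ Y) ++ T.filter (· ∈ X) ++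
    T.filter (· ∈ Y) ++ T.filter (· ∉ X ∪ Y) ++ T.filter (· ∈ Y)

theorem alternatesFrom_swapWord (hT : pairSubword T u v = [u, v]) (hX : v ∈ X → u ∈ X) :
    AlternatesFrom (swapWord T X) u v := by
  refine ⟨2, ?_⟩
  simp only [swapWord, pairSubword_append, pairSubword_filter, hT]
  by_cases hu : u ∈ X <;> by_cases hv : v ∈ X <;> simp_all

theorem not_alternates_swapWord (hT : pairSubword T x y = [x, y]) (hx : x ∉ X) (hy : y ∈ X) :
    ¬ Alternates (swapWord T X) x y := by
  have hword : pairSubword (swapWord T X) x y = [x, y, y, x] := by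
    simp [swapWord, pairSubword_append, pairSubword_filter, hT, hx, hy]
  change ¬ (pairSubword (swapWord T X) x y).IsChain (· ≠ ·)
  simp [hword]

theorem alternatesFrom_stretchWord (hT : pairSubword T u v = [u, v]) (hdisj : Disjoint X Y)
    (hX : v ∈ X → u ∈ X) (hY : u ∈ Y → v ∈ Y) (hXY : u ∈ X → v ∉ Y) :
    AlternatesFrom (stretchWord T X Y) u v := by
  have hu : u ∈ X → u ∉ Y := fun h => Set.disjoint_left.1 hdisj h
  have hv : v ∈ X → v ∉ Y := fun h => Set.disjoint_left.1 hdisj h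
  refine ⟨2, ?_⟩
  simp only [stretchWord, pairSubword_append, pairSubword_filter, hT]
  by_cases huX : u ∈ X <;> by_cases hvX : v ∈ X <;> by_cases huY : u ∈ Y <;>
    by_cases hvY : v ∈ Y <;> simp_all

theorem not_alternates_stretchWord (hT : pairSubword T x y = [x, y]) (hdisj : Disjoint X Y)
    (hx : x ∈ X) (hy : y ∈ Y) : ¬ Alternates (stretchWord T X Y) x y := by
  have hword : pairSubword (stretchWord T X Y) x y = [x, x, y, y] := by
    simp [stretchWord, pairSubword_append, pairSubword_filter, hT, hx, hy,
      Set.disjoint_left.1 hdisj hx, Set.disjoint_right.1 hdisj hy]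
  change ¬ (pairSubword (stretchWord T X Y) x y).IsChain (· ≠ ·)
  simp [hword]

end Separation

section Semitransitive

open Relation

variable {V : Type*} {r : V → V → Prop}

theorem represents_flatten_fromRel [DecidableEq V] {L : List (List V)}
    (hmem : ∀ v, ∃ w ∈ L, v ∈ w) (hrel : ∀ x y, r x y → ∀ w ∈ L, AlternatesFrom w x y)
    (hnot : ∀ x y, x ≠ y → ¬ r x y → ¬ r y x → ∃ w ∈ L, ¬ Alternates w x y) :
    Represents L.flatten (SimpleGraph.fromRel r) := by
  refine ⟨fun v => List.mem_flatten.2 (hmem v), fun x y hxy => ⟨fun halt => ?_, ?_⟩⟩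
  · by_contra hadj
    simp only [SimpleGraph.fromRel_adj, hxy, ne_eq, not_false_eq_true, true_and, not_or] at hadj
    obtain ⟨w, hw, hnalt⟩ := hnot x y hxy hadj.1 hadj.2
    exact hnalt (halt.of_isInfix (List.infix_of_mem_flatten hw))
  · rintro ⟨-, h | h⟩
    · exact (AlternatesFrom.flatten (hrel x y h)).alternates hxy
    · exact alternates_comm.1 ((AlternatesFrom.flatten (hrel y x h)).alternates hxy.symm)

theorem wordRepresentable_fromRel_of_forall_exists_word [Finite V] [DecidableEq V] {T : List V}
    (hmem : ∀ v, v ∈ T) (hT : ∀ u v, r u v → AlternatesFrom T u v)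
    (hsep : ∀ x y, x ≠ y → ¬ r x y → ¬ r y x →
      ∃ w, (∀ u v, r u v → AlternatesFrom w u v) ∧ ¬ Alternates w x y) :
    WordRepresentable (SimpleGraph.fromRel r) := by
  cases nonempty_fintype V
  have hword : ∀ e : V × V, ∃ w, (∀ u v, r u v → AlternatesFrom w u v) ∧
      (e.1 ≠ e.2 → ¬ r e.1 e.2 → ¬ r e.2 e.1 → ¬ Alternates w e.1 e.2) := by
    rintro ⟨x, y⟩
    by_cases h : x ≠ y ∧ ¬ r x y ∧ ¬ r y x
    · obtain ⟨w, hw, hnalt⟩ := hsep x y h.1 h.2.1 h.2.2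
      exact ⟨w, hw, fun _ _ _ => hnalt⟩
    · exact ⟨T, hT, fun hxy hr hr' => (h ⟨hxy, hr, hr'⟩).elim⟩
  choose c hc hnalt using hword
  refine ⟨_, represents_flatten_fromRel (L := T :: Finset.univ.toList.map c)
    (fun v => ⟨T, by simp, hmem v⟩) (fun x y h w hw => ?_) fun x y hxy hr hr' =>
      ⟨c (x, y), by simp, hnalt (x, y) hxy hr hr'⟩⟩
  rcases List.mem_cons.1 hw with rfl | hw
  · exact hT x y h
  · obtain ⟨e, -, rfl⟩ := List.mem_map.1 hw
    exact hc e x y h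

/-- A semi-transitive orientation, `r u v` meaning that there is an edge directed from `u` to `v`:
it has no directed cycle and no shortcut. The latter says that if a directed path from `u` to `v`
is accompanied by an edge `u → v`, then any two vertices of the path are joined by an edge. -/
structure IsSemitransitive (r : V → V → Prop) : Prop where
  acyclic : ∀ v, ¬ TransGen r v v
  rel_of_path : ∀ ⦃u x y v⦄, r u v → ReflTransGen r u x → TransGen r x y → ReflTransGen r y v →
    r x y

theorem exists_isLinearOrder_of_acyclic (hr : ∀ v, ¬ TransGen r v v) :
    ∃ s : V → V → Prop, IsLinearOrder V s ∧ ReflTransGen r ≤ s := by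
  have : Std.Antisymm (ReflTransGen r) := ⟨fun a b hab hba =>
    (reflTransGen_iff_eq_or_transGen.1 hba).elim id fun h => (hr b (h.trans_left hab)).elim⟩
  have : IsPartialOrder V (ReflTransGen r) := {}
  exact extend_partialOrder _

theorem exists_alternatesFrom_and_not_alternates [DecidableEq V] (hr : IsSemitransitive r)
    {T : List V} (hT : ∀ u v, r u v → pairSubword T u v = [u, v]) {x y : V} (hrxy : ¬ r x y)
    (hyx : ¬ ReflTransGen r y x) (hTxy : pairSubword T x y = [x, y]) :
    ∃ w, (∀ u v, r u v → AlternatesFrom w u v) ∧ ¬ Alternates w x y := by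
  by_cases hxy : ReflTransGen r x y
  · have hpath : TransGen r x y := (reflTransGen_iff_eq_or_transGen.1 hxy).resolve_left
      fun h => hyx (h ▸ .refl)
    have hdisj : Disjoint {v | ReflTransGen r v x} {v | ReflTransGen r y v} :=
      Set.disjoint_left.2 fun v hvx hyv => hyx (hyv.trans hvx)
    refine ⟨stretchWord T {v | ReflTransGen r v x} {v | ReflTransGen r y v}, fun u v huv => ?_,
      not_alternates_stretchWord hTxy hdisj .refl .refl⟩
    exact alternatesFrom_stretchWord (hT u v huv) hdisj (.head huv) (.tail · huv)
      fun hux hyv => hrxy (hr.rel_of_path huv hux hpath hyv)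
  · exact ⟨swapWord T {v | ReflTransGen r v y},
      fun u v huv => alternatesFrom_swapWord (hT u v huv) (.head huv),
      not_alternates_swapWord hTxy hxy .refl⟩

theorem IsSemitransitive.wordRepresentable [Finite V] [DecidableEq V] (hr : IsSemitransitive r) :
    WordRepresentable (SimpleGraph.fromRel r) := by
  obtain ⟨s, hs, hrs⟩ := exists_isLinearOrder_of_acyclic hr.acyclic
  obtain ⟨T, hmem, hT⟩ := exists_list_pairSubword_eq s
  have hTr : ∀ u v, r u v → pairSubword T u v = [u, v] := fun u v huv =>
    hT u v (fun h => hr.acyclic v (.single (h ▸ huv))) (hrs u v (.single huv))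
  have hsep : ∀ x y, x ≠ y → s x y → ¬ r x y →
      ∃ w, (∀ u v, r u v → AlternatesFrom w u v) ∧ ¬ Alternates w x y := fun x y hxy hsxy hrxy =>
    exists_alternatesFrom_and_not_alternates hr hTr hrxy
      (fun hyx => hxy (antisymm hsxy (hrs y x hyx))) (hT x y hxy hsxy)
  refine wordRepresentable_fromRel_of_forall_exists_word hmem
    (fun u v huv => alternatesFrom_of_pairSubword_eq (hTr u v huv)) fun x y hxy hrxy hryx => ?_
  rcases total_of s x y with h | h
  · exact hsep x y hxy h hrxy
  · simpa only [alternates_comm] using hsep y x hxy.symm h hryx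

end Semitransitive

section ResidueOrientation

open Relation

variable {V α : Type*} [LinearOrder α] {k l : ℕ} {s : V → ℕ} {q : V → α} {x y : V}

/-- The orientation of `G_n(0^k 1^l)`, where `s v` and `q v` stand for the residue and the quotient
of the vertex `v` on division by `k + l`. In the first case the label of `x` is the larger one, and
the difference of the labels is congruent to `k + l - (s y - s x)`, which exceeds `k` iff
`s y < s x + l`; in the second the label of `y` is larger, with difference congruent to
`s y - s x`. -/
def residueRel (k l : ℕ) (s : V → ℕ) (q : V → α) (x y : V) : Prop :=
  (q y < q x ∧ s x ≤ s y ∧ s y < s x + l) ∨ (q x ≤ q y ∧ s x + k < s y)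

theorem residue_le_and_of_transGen (h : TransGen (residueRel k l s q) x y) :
    s x ≤ s y ∧ (q y < q x ∨ s x + k < s y) := by
  induction h with
  | single h => rcases h with h | h <;> grind
  | tail _ h ih => rcases h with h | h <;> grind

theorem residue_le_and_of_reflTransGen (h : ReflTransGen (residueRel k l s q) x y) :
    s x ≤ s y ∧ (q y ≤ q x ∨ s x + k < s y) := by
  rcases reflTransGen_iff_eq_or_transGen.1 h with rfl | h
  · exact ⟨le_rfl, .inl le_rfl⟩
  · exact (residue_le_and_of_transGen h).imp_right (.imp_left le_of_lt)

theorem isSemitransitive_residueRel (hs : ∀ v, s v ≤ k + l) :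
    IsSemitransitive (residueRel k l s q) where
  acyclic v h := by
    rcases (residue_le_and_of_transGen h).2 with h | h
    · exact h.false
    · omega
  rel_of_path u x y v huv hux hxy hyv := by
    obtain ⟨hsux, hqux⟩ := residue_le_and_of_reflTransGen hux
    obtain ⟨hsxy, hqxy⟩ := residue_le_and_of_transGen hxy
    obtain ⟨hsyv, hqyv⟩ := residue_le_and_of_reflTransGen hyv
    have hsv := hs v
    rcases lt_or_ge (q y) (q x) with hq | hq
    · refine .inl ⟨hq, hsxy, ?_⟩
      rcases huv with ⟨-, -, hsuv⟩ | ⟨hquv, -⟩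
      · omega
      · by_contra! hgap
        have hqxu : q x ≤ q u := hqux.resolve_right (by omega)
        have hqvy : q v ≤ q y := hqyv.resolve_right (by omega)
        exact ((hqxu.trans hquv).trans hqvy).not_gt hq
    · exact .inr ⟨hq, hqxy.resolve_left hq.not_gt⟩

end ResidueOrientation

theorem repMod_eq_of_modEq {d r m : ℕ} (hr : 0 < r) (hrm : r ≤ m) (h : d ≡ r [MOD m]) :
    repMod d m = r := by
  rw [repMod, h]
  rcases hrm.eq_or_lt with rfl | hlt
  · simp
  · simp [Nat.mod_eq_of_lt hlt, hr.ne']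

theorem repMod_sub {i j m : ℕ} (hij : i ≤ j) (hm : 0 < m) :
    repMod (j - i) m = if i % m < j % m then j % m - i % m else j % m + m - i % m := by
  have hi := Nat.mod_lt i hm
  have hj := Nat.mod_lt j hm
  have hmod : i % m + (j - i) ≡ j % m [MOD m] := by
    calc i % m + (j - i) ≡ i + (j - i) [MOD m] := (Nat.mod_modEq i m).add_right _
      _ = j := Nat.add_sub_of_le hij
      _ ≡ j % m [MOD m] := (Nat.mod_modEq j m).symm
  split_ifs with h
  · refine repMod_eq_of_modEq (by omega) (by omega) (Nat.ModEq.add_left_cancel' (i % m) ?_)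
    rwa [Nat.add_sub_of_le h.le]
  · refine repMod_eq_of_modEq (by omega) (by omega) (Nat.ModEq.add_left_cancel' (i % m) ?_)
    rw [Nat.add_sub_of_le (by omega)]
    exact hmod.trans Nat.add_modEq_right.symm

theorem div_lt_div_of_lt_of_mod_le {i j m : ℕ} (hij : i < j) (h : j % m ≤ i % m) :
    i / m < j / m := by
  by_contra! hq
  have := Nat.mul_le_mul_left m hq
  have := Nat.mod_add_div i m
  have := Nat.mod_add_div j m
  omega

theorem repMod_sub_bounds_iff_residueRel {i j k l : ℕ} (hij : i < j) (hl : 0 < l) :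
    k + 1 ≤ repMod (j - i) (k + l) ∧ repMod (j - i) (k + l) ≤ k + l ↔
      residueRel k l (· % (k + l)) (· / (k + l)) i j ∨
        residueRel k l (· % (k + l)) (· / (k + l)) j i := by
  have hm : 0 < k + l := by omega
  have hi := Nat.mod_lt i hm
  have hj := Nat.mod_lt j hm
  have hle : i / (k + l) ≤ j / (k + l) := Nat.div_le_div_right hij.le
  rw [repMod_sub hij.le hm]
  simp only [residueRel]
  split_ifs with h
  · omega
  · have hlt := div_lt_div_of_lt_of_mod_le hij (not_lt.1 h)
    omega

theorem toeplitzGraph_eq_fromRel_residueRel {k l : ℕ} (n : ℕ) (hl : 0 < l) :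
    toeplitzGraph n (k + l) (fun r => decide (k + 1 ≤ r ∧ r ≤ k + l)) =
      SimpleGraph.fromRel (residueRel k l (fun v : Fin n => (v : ℕ) % (k + l))
        fun v => (v : ℕ) / (k + l)) := by
  ext x y
  simp only [toeplitzGraph, SimpleGraph.fromRel_adj, decide_eq_true_eq]
  refine and_congr_right fun hxy => ?_
  rcases lt_or_gt_of_ne (Fin.val_ne_of_ne hxy) with h | h
  · simp only [h, h.not_gt, true_and, false_and, or_false]
    exact repMod_sub_bounds_iff_residueRel h hl
  · simp only [h, h.not_gt, true_and, false_and, false_or]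
    exact (repMod_sub_bounds_iff_residueRel h hl).trans or_comm

/-- The Toeplitz graph G_n(0^k 1^l): vertices i < j are adjacent iff the
representative of j − i modulo k+l taken in {1,...,k+l} is at least k+1.
It is word-representable. -/
theorem toeplitz_0k1l_word_representable (k l n : ℕ)
    (hk : 0 < k) (hl : 0 < l) (hn : 0 < n) :
    WordRepresentable (toeplitzGraph n (k + l)
      (fun r => decide (k + 1 ≤ r ∧ r ≤ k + l))) := by
  rw [toeplitzGraph_eq_fromRel_residueRel n hl]
  exact (isSemitransitive_residueRel fun v => (Nat.mod_lt _ (by omega)).le).wordRepresentable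
end

section
/- Let k < m be positive integers with gcd(k,m) = 1. Then for every n, the Toeplitz graph on vertex set {1,…,n}, where distinct i < j are adjacent if and only if the representative of j−i modulo m in {1,…,m} is different from k and different from m, is word-representable. -/
/-!
Since `k` is a unit modulo `m`, dividing the residues by `k` turns the non-edges `i < j` into the
pairs where the class of `j` in `ZMod m` is that of `i` or the next one. In a word listing the
classes cyclically, letters of different classes alternate. Starting a round at class `c` by merging
`c` and `c + 1` in decreasing order lists `j` before `i` for `i < j` in these classes. Reading on to
the next visit of `c` then gives `j i i j` if both are in class `c`, and `j i i` if `i` is in class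
`c` and `j` in class `c + 1`; every other pair of letters of different classes still occurs in the
cyclic order.
-/

theorem Alternates.symm {V : Type*} [DecidableEq V] {w : List V} {x y : V}
    (h : Alternates w x y) : Alternates w y x := by
  simpa only [Alternates, Bool.or_comm] using h

theorem Alternates.of_infix {V : Type*} [DecidableEq V] {v w : List V} {x y : V}
    (h : Alternates w x y) (hvw : v <:+: w) : Alternates v x y :=
  List.IsChain.infix h (hvw.filter _)

theorem represents_of_forall_lt {V : Type*} [LinearOrder V] {w : List V} {G : SimpleGraph V}
    (hmem : ∀ v, v ∈ w) (hlt : ∀ i j, i < j → (Alternates w i j ↔ G.Adj i j)) :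
    Represents w G := by
  refine ⟨hmem, fun x y hxy => ?_⟩
  rcases hxy.lt_or_gt with h | h
  · exact hlt x y h
  · rw [G.adj_comm, ← hlt y x h]
    exact ⟨Alternates.symm, Alternates.symm⟩

section Follows

variable {V α ι : Type*} [DecidableEq V] [DecidableEq α] {f : V → α} {x y : V}

/-- The word `w` follows the sequence of classes `s` on the letters `x` and `y`: the occurrences of
`x` and `y` in `w`, read through the classification `f`, are the occurrences of `f x` and `f y`
in `s`. This transfers alternation of classes in `s` to alternation of letters in `w`. -/
def Follows (f : V → α) (x y : V) (w : List V) (s : List α) : Prop :=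
  (w.filter (fun z => z = x || z = y)).map f = s.filter (fun c => c = f x ∨ c = f y)

theorem Follows.append {w₁ w₂ : List V} {s₁ s₂ : List α} (h₁ : Follows f x y w₁ s₁)
    (h₂ : Follows f x y w₂ s₂) : Follows f x y (w₁ ++ w₂) (s₁ ++ s₂) := by
  unfold Follows at *
  rw [List.filter_append, List.map_append, h₁, h₂, List.filter_append]

theorem Follows.flatMap {w : ι → List V} {s : ι → List α} (h : ∀ t, Follows f x y (w t) (s t))
    (l : List ι) : Follows f x y (l.flatMap w) (l.flatMap s) := by
  induction l with
  | nil => rfl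
  | cons t l ih => exact (h t).append ih

theorem Follows.alternates {w : List V} {s : List α} (h : Follows f x y w s)
    (hs : (s.filter (fun c => c = f x ∨ c = f y)).IsChain (· ≠ ·)) : Alternates w x y := by
  rw [← h, List.isChain_map] at hs
  exact hs.imp fun _ _ => ne_of_apply_ne f

end Follows

section Blocks

variable {V α : Type*} [LinearOrder V] [Fintype V] [DecidableEq α] {f : V → α} {i j : V}

/-- The block listing the vertices of class `c` in increasing order. -/
def ascending (f : V → α) (c : α) : List V :=
  (Finset.univ.sort).filter (fun v => f v = c)

/-- The block listing the vertices of the classes `c` and `d`, merged in decreasing order. -/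
def descendingMerge (f : V → α) (c d : α) : List V :=
  (Finset.univ.sort).reverse.filter (fun v => f v = c ∨ f v = d)

theorem filter_pair_sort_univ (hij : i < j) :
    (Finset.univ.sort).filter (fun z => z = i || z = j) = [i, j] :=
  (List.sortedLT_iff_pairwise.mpr
    ((Finset.univ.sortedLT_sort.pairwise).filter _)).eq_of_mem_iff
      (List.sortedLT_iff_pairwise.mpr (by simpa using hij)) (by simp)

theorem filter_pair_ascending (c : α) (hij : i < j) :
    (ascending f c).filter (fun z => z = i || z = j) = [i, j].filter (fun v => f v = c) := by
  rw [ascending, List.filter_comm, filter_pair_sort_univ hij]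

theorem filter_pair_descendingMerge (c d : α) (hij : i < j) :
    (descendingMerge f c d).filter (fun z => z = i || z = j) =
      [j, i].filter (fun v => f v = c ∨ f v = d) := by
  rw [descendingMerge, List.filter_comm, List.filter_reverse, filter_pair_sort_univ hij]
  rfl

theorem follows_ascending (hij : i < j) (hne : f i ≠ f j) (c : α) :
    Follows f i j (ascending f c) [c] := by
  rw [Follows, filter_pair_ascending c hij]
  grind

theorem follows_descendingMerge (hij : i < j) (hne : f i ≠ f j) {c d : α} (hcd : c ≠ d)
    (hmerge : ¬(f i = c ∧ f j = d)) : Follows f i j (descendingMerge f c d) [c, d] := by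
  rw [Follows, filter_pair_descendingMerge c d hij]
  grind

end Blocks

section ResidueSequence

variable {m : ℕ}

theorem natCast_ne_zero_and_ne_one {u : ℕ} (hu : 2 ≤ u) (hum : u < m) :
    (u : ZMod m) ≠ 0 ∧ (u : ZMod m) ≠ 1 := by
  have hinj := CharP.natCast_injOn_Iio (ZMod m) m
  refine ⟨fun h => ?_, fun h => ?_⟩
  · exact absurd (hinj hum (show 0 < m by omega) (by simpa using h)) (by omega)
  · exact absurd (hinj hum (show 1 < m by omega) (by simpa using h)) (by omega)

theorem natCast_eq_add_natCast_iff_sub_mod_eq {i j k : ℕ} (hij : i ≤ j) (hk : k < m) :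
    (j : ZMod m) = i + k ↔ (j - i) % m = k := by
  rw [← sub_eq_iff_eq_add', ← Nat.cast_sub hij, ZMod.natCast_eq_natCast_iff',
    Nat.mod_eq_of_lt hk]

theorem exists_natCast_eq_between [NeZero m] {c d : ZMod m} (hcd : c ≠ d) {p q : ℕ} (hpq : p < q)
    (hp : (p : ZMod m) = c) (hq : (q : ZMod m) = c) : ∃ r, p < r ∧ r < q ∧ (r : ZMod m) = d := by
  have hdvd : m ∣ q - p := by
    rw [← ZMod.natCast_eq_zero_iff, Nat.cast_sub hpq.le, hp, hq, sub_self]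
  have hle : m ≤ q - p := Nat.le_of_dvd (Nat.sub_pos_of_lt hpq) hdvd
  have hlt : (d - c).val < m := ZMod.val_lt _
  have hpos : 0 < (d - c).val := ZMod.val_pos.mpr (sub_ne_zero.mpr hcd.symm)
  exact ⟨p + (d - c).val, by omega, by omega, by simp [hp]⟩

theorem isChain_ne_filter_range'_natCast [NeZero m] {a b : ZMod m} (hab : a ≠ b) (s N : ℕ) :
    (((List.range' s N).map (Nat.cast : ℕ → ZMod m)).filter
      (fun c => c = a ∨ c = b)).IsChain (· ≠ ·) := by
  rw [List.filter_map, List.isChain_map]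
  induction N generalizing s with
  | zero => exact List.isChain_nil
  | succ N ih =>
    rw [List.range'_succ, List.filter_cons]
    split_ifs with hs
    · refine List.isChain_cons.mpr ⟨fun q hq hsq => ?_, ih (s + 1)⟩
      rw [List.head?_filter, Option.mem_def, List.find?_range'_eq_some] at hq
      obtain ⟨-, hmem, hfirst⟩ := hq
      have hlt : s < q := (List.mem_range'_1.mp hmem).1
      have hskip : ∀ r, s < r → r < q → (r : ZMod m) ≠ a ∧ (r : ZMod m) ≠ b := by
        simpa [Nat.succ_le_iff] using hfirst
      rcases (by simpa using hs : (s : ZMod m) = a ∨ (s : ZMod m) = b) with ha | hb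
      · obtain ⟨r, hsr, hrq, hr⟩ := exists_natCast_eq_between hab hlt ha (hsq ▸ ha)
        exact (hskip r hsr hrq).2 hr
      · obtain ⟨r, hsr, hrq, hr⟩ := exists_natCast_eq_between hab.symm hlt hb (hsq ▸ hb)
        exact (hskip r hsr hrq).1 hr
    · exact ih (s + 1)

theorem flatMap_range_natCast_add {R : Type*} [AddMonoidWithOne R] [CharP R m] (t : ℕ) :
    (List.range t).flatMap (fun s : ℕ => (List.range (m + 1)).map (fun u : ℕ => (s : R) + u)) =
      (List.range (t * (m + 1))).map Nat.cast := by
  induction t with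
  | zero => simp
  | succ t ih =>
    have hstart : ((t * m : ℕ) : R) = 0 := (CharP.cast_eq_zero_iff R m _).mpr (dvd_mul_left m t)
    rw [List.range_succ (n := t), List.flatMap_append, ih, Nat.succ_mul,
      List.range_add (n := t * (m + 1)), List.map_append]
    simp [mul_add, hstart]

end ResidueSequence

section Rounds

variable {V : Type*} [LinearOrder V] [Fintype V] {m : ℕ} {f : V → ZMod m} {i j : V}

/-- A round runs through the classes `c, c + 1, …, c + m = c`, with the first two merged in
decreasing order. For `i < j`, the letters `i` and `j` fail to alternate within the round exactly
when `i` is in class `c` and `j` in class `c` or `c + 1`. -/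
def classRound (f : V → ZMod m) (c : ZMod m) : List V :=
  descendingMerge f c (c + 1) ++
    (List.range' 2 (m - 2)).flatMap (fun u : ℕ => ascending f (c + u)) ++ ascending f c

/-- The concatenation of all rounds. Each one ends in the class just before the one where the next
begins, so the whole word runs through the classes cyclically. -/
def roundsWord (f : V → ZMod m) : List V :=
  (List.range m).flatMap (fun s : ℕ => classRound f s)

theorem follows_classRound (hm : 1 < m) (hij : i < j) (hne : f i ≠ f j) (hsucc : f j ≠ f i + 1)
    (c : ZMod m) :
    Follows f i j (classRound f c) ((List.range (m + 1)).map (fun u : ℕ => c + u)) := by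
  have : Nontrivial (ZMod m) := ⟨f i, f j, hne⟩
  have hclasses : (List.range (m + 1)).map (fun u : ℕ => c + u) =
      [c, c + 1] ++ (List.range' 2 (m - 2)).flatMap (fun u : ℕ => [c + (u : ZMod m)]) ++ [c] := by
    obtain ⟨p, rfl⟩ : ∃ p, m = p + 2 := Nat.exists_eq_add_of_le' hm
    rw [← List.map_eq_flatMap, List.range_succ, List.range_eq_range']
    simp [List.range'_succ]
  rw [hclasses]
  refine ((follows_descendingMerge hij hne (by simp) ?_).append
    (Follows.flatMap (fun u => follows_ascending hij hne _) _)).append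
      (follows_ascending hij hne c)
  rintro ⟨rfl, h⟩
  exact hsucc h

theorem alternates_roundsWord (hm : 1 < m) (hij : i < j) (hne : f i ≠ f j)
    (hsucc : f j ≠ f i + 1) : Alternates (roundsWord f) i j := by
  have : NeZero m := ⟨by omega⟩
  have hfollows :=
    Follows.flatMap (fun s : ℕ => follows_classRound hm hij hne hsucc s) (List.range m)
  rw [flatMap_range_natCast_add, List.range_eq_range' (n := m * (m + 1))] at hfollows
  exact hfollows.alternates (isChain_ne_filter_range'_natCast hne _ _)

theorem classRound_infix_roundsWord [NeZero m] (f : V → ZMod m) (c : ZMod m) :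
    classRound f c <:+: roundsWord f :=
  List.infix_of_mem_flatten
    (List.mem_map.mpr ⟨c.val, List.mem_range.mpr (ZMod.val_lt c), by simp⟩)

theorem mem_roundsWord [NeZero m] (f : V → ZMod m) (v : V) : v ∈ roundsWord f :=
  (classRound_infix_roundsWord f (f v)).subset (by simp [classRound, ascending])

theorem filter_pair_classRound (hij : i < j) (h : f j = f i ∨ f j = f i + 1) :
    (classRound f (f i)).filter (fun z => z = i || z = j) =
      j :: i :: [i, j].filter (fun v => f v = f i) := by
  have hmiddle : ((List.range' 2 (m - 2)).flatMap (fun u : ℕ => ascending f (f i + u))).filter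
      (fun z => z = i || z = j) = [] := by
    rw [List.filter_flatMap, List.flatMap_eq_nil_iff]
    intro u hu
    obtain ⟨h0, h1⟩ := natCast_ne_zero_and_ne_one (m := m) (u := u) (by grind) (by grind)
    rw [filter_pair_ascending _ hij]
    grind
  rw [classRound, List.filter_append, List.filter_append, hmiddle, filter_pair_ascending _ hij,
    filter_pair_descendingMerge _ _ hij]
  simp [h]

theorem not_alternates_roundsWord [NeZero m] (hij : i < j) (h : f j = f i ∨ f j = f i + 1) :
    ¬ Alternates (roundsWord f) i j := by
  intro halt
  have hround : (j :: i :: [i, j].filter (fun v => f v = f i)).IsChain (· ≠ ·) :=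
    filter_pair_classRound hij h ▸ halt.of_infix (classRound_infix_roundsWord f (f i))
  simp at hround

end Rounds

section WordRepresentable

variable {V : Type*} [LinearOrder V] [Finite V] {m : ℕ} {G : SimpleGraph V}

theorem wordRepresentable_of_adj_iff_ne_add_one (hm : 1 < m) (f : V → ZMod m)
    (hG : ∀ i j, i < j → (G.Adj i j ↔ f j ≠ f i + 1 ∧ f j ≠ f i)) : WordRepresentable G := by
  have := Fintype.ofFinite V
  have : NeZero m := ⟨by omega⟩
  refine ⟨roundsWord f, represents_of_forall_lt (mem_roundsWord f) fun i j hij => ?_⟩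
  rw [hG i j hij]
  refine ⟨fun halt => ?_, fun h => alternates_roundsWord hm hij h.2.symm h.1⟩
  exact ⟨fun h => not_alternates_roundsWord hij (.inr h) halt,
    fun h => not_alternates_roundsWord hij (.inl h) halt⟩

theorem wordRepresentable_of_adj_iff_ne_add_unit (hm : 1 < m) (f : V → ZMod m) (u : (ZMod m)ˣ)
    (hG : ∀ i j, i < j → (G.Adj i j ↔ f j ≠ f i + u ∧ f j ≠ f i)) :
    WordRepresentable G := by
  refine wordRepresentable_of_adj_iff_ne_add_one hm (fun v => f v * ↑u⁻¹) fun i j hij => ?_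
  have hsucc : f j * ↑u⁻¹ = f i * ↑u⁻¹ + 1 ↔ f j = f i + u := by
    rw [← u.mul_inv, ← add_mul, Units.mul_left_inj]
  rw [hG i j hij, Ne, Ne, Ne, Ne, hsucc, Units.mul_left_inj]

end WordRepresentable

/-- For coprime k < m, the Toeplitz graph G_n(1^(k-1) 0 1^(m-k)), where i < j
are adjacent iff (j − i) % m ∉ {k, 0}, is word-representable. -/
theorem toeplitz_gap_coprime_word_representable (k m n : ℕ)
    (hk : 0 < k) (hkm : k < m) (hgcd : Nat.gcd k m = 1) :
    WordRepresentable (SimpleGraph.fromRel (fun i j : Fin n =>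
      (i : ℕ) < (j : ℕ) ∧ ((j : ℕ) - (i : ℕ)) % m ≠ k ∧ ((j : ℕ) - (i : ℕ)) % m ≠ 0)) := by
  refine wordRepresentable_of_adj_iff_ne_add_unit (by omega) (fun i : Fin n => ((i : ℕ) : ZMod m))
    (ZMod.unitOfCoprime k hgcd) fun i j hij => ?_
  have hlt : (i : ℕ) < j := hij
  have hgap := natCast_eq_add_natCast_iff_sub_mod_eq hlt.le hkm
  have hzero : ((j : ℕ) : ZMod m) = (i : ℕ) ↔ ((j : ℕ) - i) % m = 0 := by
    simpa using natCast_eq_add_natCast_iff_sub_mod_eq hlt.le (hk.trans hkm)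
  simp [hgap, hzero, hij, hij.ne, hij.not_gt]
end
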